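/- Let E be a Banach space, T > 0, and let K be a Volterra kernel on [0,T] satisfying Condition (A) with exponent α ∈ [0, 1/4). Let ψ: [0,T]² → E be λ-Hölder bi-continuous with λ > 2α. Then both of the following hold as the mesh of the grid partition π of [0,T]² tends to 0: (i) ∫_{[0,T]²} ‖(K*⊗K*)(ψ^π − ψ)(u,v)‖_E² du dv → 0, and (ii) ∫_0^T ‖(K*⊗K*)(ψ^π − ψ)(r,r)‖_E dr → 0, where ψ^π is the step approximation of ψ associated with π. -/

import Mathlib

open MeasureTheory Set

noncomputable section

namespace YS

variable {E : Type*} [NormedAddCommGroup E] [NormedSpace ℝ E]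

/-- A Volterra kernel: a measurable `K : ℝ² → ℝ` with `K t s = 0` whenever `s ≥ t`. -/
def IsVolterraKernel (K : ℝ → ℝ → ℝ) : Prop :=
  Measurable (Function.uncurry K) ∧ ∀ t s : ℝ, t ≤ s → K t s = 0

/-- Condition (A) with exponent `α` and constant `C`; here `K' t s` denotes the partial
derivative `∂K(t,s)/∂t`, whose existence is part of the condition. -/
def CondA (T α C : ℝ) (K K' : ℝ → ℝ → ℝ) : Prop :=
  (∀ s t : ℝ, 0 < s → s < t → t ≤ T → |K t s| ≤ C * s ^ (-α) * (t - s) ^ (-α)) ∧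
  ∀ s t : ℝ, 0 < s → s < t → t ≤ T →
    HasDerivAt (fun r => K r s) (K' t s) t ∧ |K' t s| ≤ C * (t - s) ^ (-(α + 1))

/-- The operator `𝒦*`:  `(𝒦*φ)(s) = φ(s)K(T,s) + ∫_s^T [φ(r) − φ(s)] ∂K(r,s)/∂r dr`. -/
def Kstar (T : ℝ) (K K' : ℝ → ℝ → ℝ) (φ : ℝ → E) (s : ℝ) : E :=
  K T s • φ s + ∫ r in s..T, K' r s • (φ r - φ s)

/-- The operator `A^K`. -/
def AK (T : ℝ) (K' : ℝ → ℝ → ℝ) (φ : ℝ → E) (s : ℝ) : E :=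
  ∫ r in s..T, K' r s • (φ r - φ s)

/-- Rectangular increment `f(u₁,u₂;v₁,v₂)`. -/
def rectInc (ψ : ℝ → ℝ → E) (u₁ u₂ v₁ v₂ : ℝ) : E :=
  ψ u₁ v₁ + ψ u₂ v₂ - ψ u₁ v₂ - ψ u₂ v₁

/-- The operator `B^K`. -/
def BK (T : ℝ) (K' : ℝ → ℝ → ℝ) (ψ : ℝ → ℝ → E) (u v : ℝ) : E :=
  ∫ r₂ in v..T, ∫ r₁ in u..T, (K' r₁ u * K' r₂ v) • rectInc ψ u r₁ v r₂

/-- The operator `𝒦* ⊗ 𝒦*`. -/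
def KstarT (T : ℝ) (K K' : ℝ → ℝ → ℝ) (ψ : ℝ → ℝ → E) (u v : ℝ) : E :=
  (K T u * K T v) • ψ u v + K T v • AK T K' (fun x => ψ x v) u +
    K T u • AK T K' (fun y => ψ u y) v + BK T K' ψ u v

/-- A partition `0 = s₀ < s₁ < ⋯ < s_n = T` of `[0,T]`. -/
structure Partition (T : ℝ) where
  n : ℕ
  pts : ℕ → ℝ
  n_pos : 0 < n
  first : pts 0 = 0
  last : pts n = T
  lt : ∀ i < n, pts i < pts (i + 1)

/-- Mesh of a partition: the largest increment. -/
def Partition.mesh {T : ℝ} (P : Partition T) : ℝ :=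
  (Finset.range P.n).sup' (Finset.nonempty_range_iff.mpr P.n_pos.ne')
    fun i => P.pts (i + 1) - P.pts i

/-- One-dimensional step approximation `φ^π`. -/
def step1 {T : ℝ} (P : Partition T) (φ : ℝ → E) (s : ℝ) : E :=
  ∑ i ∈ Finset.range P.n,
    (Set.Ico (P.pts i) (P.pts (i + 1))).indicator (fun _ => φ (P.pts i)) s

/-- Two-dimensional step approximation `ψ^π` for the grid partition `P × Q`. -/
def step2 {T : ℝ} (P Q : Partition T) (ψ : ℝ → ℝ → E) (u v : ℝ) : E :=
  ∑ i ∈ Finset.range P.n, ∑ j ∈ Finset.range Q.n,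
    ((Set.Ico (P.pts i) (P.pts (i + 1))) ×ˢ (Set.Ico (Q.pts j) (Q.pts (j + 1)))).indicator
      (fun _ => ψ (P.pts i) (Q.pts j)) (u, v)

/-- `λ`-Hölder continuity on `[0,T]` with constant `C`. -/
def IsHolderWith (T lam C : ℝ) (φ : ℝ → E) : Prop :=
  ∀ t₁ ∈ Icc (0:ℝ) T, ∀ t₂ ∈ Icc (0:ℝ) T, ‖φ t₁ - φ t₂‖ ≤ C * |t₁ - t₂| ^ lam

/-- `λ`-Hölder continuity on `[0,T]`. -/
def IsHolder (T lam : ℝ) (φ : ℝ → E) : Prop := ∃ C : ℝ, IsHolderWith T lam C φ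

/-- `λ`-Hölder bi-continuity with constant `C`. -/
def IsHolderBiWith (T lam C : ℝ) (ψ : ℝ → ℝ → E) : Prop :=
  (∀ u₁ ∈ Icc (0:ℝ) T, ∀ u₂ ∈ Icc (0:ℝ) T, ∀ v ∈ Icc (0:ℝ) T,
      ‖ψ u₂ v - ψ u₁ v‖ ≤ C * |u₂ - u₁| ^ lam) ∧
  ∀ u ∈ Icc (0:ℝ) T, ∀ v₁ ∈ Icc (0:ℝ) T, ∀ v₂ ∈ Icc (0:ℝ) T,
      ‖ψ u v₂ - ψ u v₁‖ ≤ C * |v₂ - v₁| ^ lam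

/-- `λ`-Hölder bi-continuity. -/
def IsHolderBi (T lam : ℝ) (ψ : ℝ → ℝ → E) : Prop := ∃ C : ℝ, IsHolderBiWith T lam C ψ

/-- Strong `λ`-Hölder bi-continuity with constant `C`. -/
def IsStrongHolderBiWith (T lam C : ℝ) (ψ : ℝ → ℝ → E) : Prop :=
  IsHolderBiWith T lam C ψ ∧
  ∀ u₁ ∈ Icc (0:ℝ) T, ∀ u₂ ∈ Icc (0:ℝ) T, ∀ v₁ ∈ Icc (0:ℝ) T, ∀ v₂ ∈ Icc (0:ℝ) T,
    ‖rectInc ψ u₁ u₂ v₁ v₂‖ ≤ C * |u₂ - u₁| ^ lam * |v₂ - v₁| ^ lam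

/-- Strong `λ`-Hölder bi-continuity. -/
def IsStrongHolderBi (T lam : ℝ) (ψ : ℝ → ℝ → E) : Prop :=
  ∃ C : ℝ, IsStrongHolderBiWith T lam C ψ

/-- The covariance function `R(s,t) = ∫_0^{s∧t} K(t,r)K(s,r) dr` of the Volterra process. -/
def covR (K : ℝ → ℝ → ℝ) (s t : ℝ) : ℝ := ∫ r in (0:ℝ)..(min s t), K t r * K s r

/-- The 2D Riemann–Stieltjes sum of `f` against `g` over the grid partition `P × Q`. -/
def RSsum {T : ℝ} (P Q : Partition T) (f g : ℝ → ℝ → ℝ) : ℝ :=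
  ∑ i ∈ Finset.range P.n, ∑ j ∈ Finset.range Q.n,
    f (P.pts i) (Q.pts j) *
      rectInc g (P.pts i) (P.pts (i + 1)) (Q.pts j) (Q.pts (j + 1))

/-!
The error `Δ = ψ^π - ψ` is bounded by a multiple of `m ^ λ`, where `m` is the mesh. Fix
`2α < γ < λ`. The increment of `Δ` over `[u, r]` is at most `(r - u) ^ γ` times a weight which blows
up only like `(s - u) ^ (-γ)` as `u` approaches the next grid point `s`, where `ψ^π` jumps; as
`γ < 1`, the integral of this weight is `O(m ^ (λ - γ))`.

A geometric mean of the two available bounds of each increment still decays like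
`(r - u) ^ (γ / 2)`, which beats the singularity of `∂K` since `γ / 2 > α`. It contains only the
square root of the weight, and it also splits the rectangular increment, for which bi-continuity
provides no joint Hölder bound, into a factor in `u` and a factor in `v`. Thus
`‖(K* ⊗ K*)Δ(u, v)‖ ^ 2 ≤ G_P(u) * G_Q(v)`, where `∫ G_P` and `∫ G_Q` tend to `0` with the mesh;
both limits follow.
-/

open Filter Topology

section SingularIntegrals

variable {a b s : ℝ}

lemma norm_intervalIntegral_le_of_norm_le_Ioo {f : ℝ → E} {g : ℝ → ℝ} (hab : a ≤ b)
    (hg : IntervalIntegrable g volume a b) (hfg : ∀ x ∈ Ioo a b, ‖f x‖ ≤ g x) :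
    ‖∫ x in a..b, f x‖ ≤ ∫ x in a..b, g x := by
  refine intervalIntegral.norm_integral_le_of_norm_le hab ?_ hg
  filter_upwards [Measure.ae_ne volume b] with x hxb hx
  exact hfg x ⟨hx.1, hx.2.lt_of_ne hxb⟩

lemma intervalIntegrable_sub_const_rpow (hs : -1 < s) (c : ℝ) :
    IntervalIntegrable (fun x => (x - c) ^ s) volume a b := by
  simpa using (intervalIntegral.intervalIntegrable_rpow' (a := a - c) (b := b - c)
    hs).comp_sub_right c

lemma intervalIntegrable_const_sub_rpow (hs : -1 < s) (c : ℝ) :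
    IntervalIntegrable (fun x => (c - x) ^ s) volume a b := by
  simpa using (intervalIntegral.intervalIntegrable_rpow' (a := c - a) (b := c - b)
    hs).comp_sub_left c

lemma integral_sub_left_endpoint_rpow (hs : -1 < s) :
    ∫ x in a..b, (x - a) ^ s = (b - a) ^ (s + 1) / (s + 1) := by
  rw [intervalIntegral.integral_comp_sub_right (fun x => x ^ s), integral_rpow (.inl hs),
    sub_self, Real.zero_rpow (by linarith), sub_zero]

lemma integral_right_endpoint_sub_rpow (hs : -1 < s) :
    ∫ x in a..b, (b - x) ^ s = (b - a) ^ (s + 1) / (s + 1) := by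
  rw [intervalIntegral.integral_comp_sub_left (fun x => x ^ s), integral_rpow (.inl hs),
    sub_self, Real.zero_rpow (by linarith), sub_zero]

end SingularIntegrals

lemma rpow_le_rpow_mul_rpow_sub {x m p q : ℝ} (hx : 0 < x) (hxm : x ≤ m) (hqp : q ≤ p) :
    x ^ p ≤ x ^ q * m ^ (p - q) := by
  calc x ^ p = x ^ q * x ^ (p - q) := by rw [← Real.rpow_add hx, add_sub_cancel]
    _ ≤ x ^ q * m ^ (p - q) := by gcongr

namespace Partition

variable {T : ℝ} (P : Partition T)

lemma monotoneOn_pts : MonotoneOn P.pts (Iic P.n) :=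
  monotoneOn_of_le_succ ordConnected_Iic fun i _ _ hi => (P.lt i hi).le

lemma pts_mem_Icc {i : ℕ} (hi : i ≤ P.n) : P.pts i ∈ Icc 0 T :=
  ⟨P.first.symm.trans_le (P.monotoneOn_pts (Nat.zero_le _) hi (Nat.zero_le i)),
    (P.monotoneOn_pts hi self_mem_Iic hi).trans_eq P.last⟩

lemma sub_le_mesh {i : ℕ} (hi : i < P.n) : P.pts (i + 1) - P.pts i ≤ P.mesh :=
  Finset.le_sup' (fun i => P.pts (i + 1) - P.pts i) (Finset.mem_range.mpr hi)

lemma mesh_pos : 0 < P.mesh :=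
  (sub_pos.mpr (P.lt 0 P.n_pos)).trans_le (P.sub_le_mesh P.n_pos)

/-- The index `i` of the cell `[s_i, s_{i+1})` of the partition containing `u ∈ [0, T)`. -/
def index (u : ℝ) : ℕ := Nat.findGreatest (fun i => P.pts i ≤ u) P.n

variable {u r : ℝ}

lemma pts_index_le (hu : 0 ≤ u) : P.pts (P.index u) ≤ u :=
  Nat.findGreatest_spec (P := fun i => P.pts i ≤ u) (Nat.zero_le _) (P.first.trans_le hu)

lemma index_lt (hu : u ∈ Ico 0 T) : P.index u < P.n := by
  refine (Nat.findGreatest_le _).lt_of_ne fun h => ?_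
  have hT := P.pts_index_le hu.1
  rw [index, h, P.last] at hT
  exact hT.not_gt hu.2

lemma lt_pts_index_add_one (hu : u ∈ Ico 0 T) : u < P.pts (P.index u + 1) :=
  not_le.mp (Nat.findGreatest_is_greatest (Nat.lt_succ_self _) (P.index_lt hu))

lemma monotone_index : Monotone P.index :=
  fun _ _ h => Nat.findGreatest_mono_left (fun _ hi => hi.trans h) _

lemma mem_Ico_pts_iff {i : ℕ} (hi : i < P.n) (hu : u ∈ Ico 0 T) :
    u ∈ Ico (P.pts i) (P.pts (i + 1)) ↔ P.index u = i := by
  constructor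
  · intro hui
    refine le_antisymm (not_lt.mp fun h => ?_) (Nat.le_findGreatest hi.le hui.1)
    have hle := P.monotoneOn_pts (a := i + 1) hi (P.index_lt hu).le h
    linarith [P.pts_index_le hu.1, hui.2]
  · rintro rfl
    exact ⟨P.pts_index_le hu.1, P.lt_pts_index_add_one hu⟩

lemma abs_pts_index_sub_le_mesh (hu : u ∈ Ico 0 T) : |P.pts (P.index u) - u| ≤ P.mesh := by
  rw [abs_sub_comm, abs_of_nonneg (sub_nonneg.mpr (P.pts_index_le hu.1))]
  linarith [P.sub_le_mesh (P.index_lt hu), P.lt_pts_index_add_one hu]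

/-- The coefficient of `(r - u) ^ γ` in the bound for the increment over `[u, r]` of the error of
the step approximation of a `lam`-Hölder function, when `m` is an upper bound for the mesh. The
second summand accounts for the jump of the step approximation at the end of the cell of `u`. -/
def incrWeight (lam γ m u : ℝ) : ℝ :=
  m ^ (lam - γ) + (P.pts (P.index u + 1) - P.pts (P.index u)) ^ lam *
    (P.pts (P.index u + 1) - u) ^ (-γ)

variable {lam γ m : ℝ} {i : ℕ}

lemma rpow_le_incrWeight (hu : u ∈ Ico 0 T) : m ^ (lam - γ) ≤ P.incrWeight lam γ m u := by
  have hcell := P.lt _ (P.index_lt hu)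
  have hnext := P.lt_pts_index_add_one hu
  exact le_add_of_nonneg_right
    (mul_nonneg (Real.rpow_nonneg (by linarith) _) (Real.rpow_nonneg (by linarith) _))

lemma incrWeight_nonneg (hm : 0 ≤ m) (hu : u ∈ Ico 0 T) : 0 ≤ P.incrWeight lam γ m u :=
  (Real.rpow_nonneg hm _).trans (P.rpow_le_incrWeight hu)

lemma pts_index_sub_rpow_le (hlam : 0 < lam) (hlam' : lam ≤ 1) (hγ : 0 ≤ γ) (hγlam : γ ≤ lam)
    (hu : u ∈ Ico 0 T) (hr : r ∈ Ioo u T) (hrm : r - u ≤ m) :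
    (P.pts (P.index r) - P.pts (P.index u)) ^ lam ≤ (r - u) ^ γ * P.incrWeight lam γ m u := by
  have hd : 0 < r - u := sub_pos.mpr hr.1
  have hrT : r ∈ Ico 0 T := ⟨hu.1.trans hr.1.le, hr.2⟩
  rcases (P.monotone_index hr.1.le).eq_or_lt with hsame | hlater
  · rw [hsame, sub_self, Real.zero_rpow hlam.ne']
    exact mul_nonneg (by positivity) (P.incrWeight_nonneg (hd.le.trans hrm) hu)
  set h := P.pts (P.index u + 1) - P.pts (P.index u)
  have h_pos : 0 < h := sub_pos.mpr (P.lt _ (P.index_lt hu))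
  have hnext_pos : 0 < P.pts (P.index u + 1) - u := sub_pos.mpr (P.lt_pts_index_add_one hu)
  have hnext_le : P.pts (P.index u + 1) ≤ P.pts (P.index r) :=
    P.monotoneOn_pts (P.index_lt hu) (P.index_lt hrT).le hlater
  have hr_le := P.pts_index_le hrT.1
  have hjump : h ^ lam ≤ (r - u) ^ γ * (h ^ lam * (P.pts (P.index u + 1) - u) ^ (-γ)) := by
    have hone : 1 ≤ (r - u) ^ γ * (P.pts (P.index u + 1) - u) ^ (-γ) := by
      rw [Real.rpow_neg hnext_pos.le, ← div_eq_mul_inv, ← Real.div_rpow hd.le hnext_pos.le]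
      exact Real.one_le_rpow ((one_le_div hnext_pos).mpr (by linarith)) hγ
    calc h ^ lam ≤ h ^ lam * ((r - u) ^ γ * (P.pts (P.index u + 1) - u) ^ (-γ)) :=
          le_mul_of_one_le_right (by positivity) hone
      _ = _ := by ring
  calc (P.pts (P.index r) - P.pts (P.index u)) ^ lam ≤ (r - u + h) ^ lam :=
        Real.rpow_le_rpow (by linarith) (by linarith [P.lt_pts_index_add_one hu]) hlam.le
    _ ≤ (r - u) ^ lam + h ^ lam := Real.rpow_add_le_add_rpow hd.le h_pos.le hlam.le hlam'
    _ ≤ (r - u) ^ γ * m ^ (lam - γ) +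
        (r - u) ^ γ * (h ^ lam * (P.pts (P.index u + 1) - u) ^ (-γ)) :=
      add_le_add (rpow_le_rpow_mul_rpow_sub hd hrm hγlam) hjump
    _ = (r - u) ^ γ * P.incrWeight lam γ m u := by rw [incrWeight, mul_add]

lemma incrWeight_eqOn_Ioo_pts (hi : i < P.n) :
    EqOn (fun u => m ^ (lam - γ) + (P.pts (i + 1) - P.pts i) ^ lam * (P.pts (i + 1) - u) ^ (-γ))
      (P.incrWeight lam γ m) (uIoo (P.pts i) (P.pts (i + 1))) := by
  intro u hu
  rw [uIoo_of_le (P.lt i hi).le] at hu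
  have huT : u ∈ Ico 0 T :=
    ⟨(P.pts_mem_Icc hi.le).1.trans hu.1.le, hu.2.trans_le (P.pts_mem_Icc hi).2⟩
  rw [incrWeight, (P.mem_Ico_pts_iff hi huT).mp ⟨hu.1.le, hu.2⟩]

lemma intervalIntegrable_incrWeight_cell (hγ : γ < 1) (hi : i < P.n) :
    IntervalIntegrable (P.incrWeight lam γ m) volume (P.pts i) (P.pts (i + 1)) :=
  (intervalIntegrable_const.add
    ((intervalIntegrable_const_sub_rpow (by linarith) _).const_mul _)).congr_uIoo
    (P.incrWeight_eqOn_Ioo_pts hi)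

lemma integral_incrWeight_cell_le (hγ : γ < 1) (hγlam : γ ≤ lam) (hm : P.mesh ≤ m) (hi : i < P.n) :
    ∫ u in P.pts i..P.pts (i + 1), P.incrWeight lam γ m u ≤
      m ^ (lam - γ) * (1 + 1 / (1 - γ)) * (P.pts (i + 1) - P.pts i) := by
  rw [← intervalIntegral.integral_congr_uIoo (P.incrWeight_eqOn_Ioo_pts hi),
    intervalIntegral.integral_add intervalIntegrable_const
      ((intervalIntegrable_const_sub_rpow (by linarith) _).const_mul _),
    intervalIntegral.integral_const, intervalIntegral.integral_const_mul,
    integral_right_endpoint_sub_rpow (by linarith), smul_eq_mul]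
  have hcell : P.pts (i + 1) - P.pts i ≤ m := (P.sub_le_mesh hi).trans hm
  have h_pos : 0 < P.pts (i + 1) - P.pts i := sub_pos.mpr (P.lt i hi)
  set h := P.pts (i + 1) - P.pts i
  have hpow : h ^ lam * h ^ (-γ + 1) ≤ m ^ (lam - γ) * h := by
    rw [← Real.rpow_add h_pos, show lam + (-γ + 1) = lam - γ + 1 by ring,
      Real.rpow_add_one h_pos.ne']
    gcongr
  have : 0 < 1 - γ := by linarith
  calc h * m ^ (lam - γ) + h ^ lam * (h ^ (-γ + 1) / (-γ + 1))
      = h * m ^ (lam - γ) + h ^ lam * h ^ (-γ + 1) / (1 - γ) := by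
        rw [mul_div_assoc, neg_add_eq_sub]
    _ ≤ h * m ^ (lam - γ) + m ^ (lam - γ) * h / (1 - γ) := by gcongr
    _ = _ := by ring

lemma intervalIntegrable_incrWeight (hγ : γ < 1) :
    IntervalIntegrable (P.incrWeight lam γ m) volume 0 T := by
  simpa only [P.first, P.last] using
    IntervalIntegrable.trans_iterate (a := P.pts) fun i hi =>
      P.intervalIntegrable_incrWeight_cell hγ hi

lemma integral_incrWeight_le (hγ : γ < 1) (hγlam : γ ≤ lam) (hm : P.mesh ≤ m) :
    ∫ u in 0..T, P.incrWeight lam γ m u ≤ m ^ (lam - γ) * (1 + 1 / (1 - γ)) * T := by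
  calc ∫ u in 0..T, P.incrWeight lam γ m u
      = ∑ i ∈ Finset.range P.n, ∫ u in P.pts i..P.pts (i + 1), P.incrWeight lam γ m u := by
        rw [intervalIntegral.sum_integral_adjacent_intervals (a := P.pts) fun i hi =>
          P.intervalIntegrable_incrWeight_cell hγ hi, P.first, P.last]
    _ ≤ ∑ i ∈ Finset.range P.n,
          m ^ (lam - γ) * (1 + 1 / (1 - γ)) * (P.pts (i + 1) - P.pts i) :=
        Finset.sum_le_sum fun i hi =>
          P.integral_incrWeight_cell_le hγ hγlam hm (Finset.mem_range.mp hi)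
    _ = m ^ (lam - γ) * (1 + 1 / (1 - γ)) * T := by
        rw [← Finset.mul_sum, Finset.sum_range_sub, P.first, P.last, sub_zero]

end Partition


section StepError

variable {F : Type*} [NormedAddCommGroup F] {T lam γ c m : ℝ} {ψ : ℝ → ℝ → F}
  (P Q : Partition T) {u v r : ℝ}

/-- The error `ψ^π - ψ` of the step approximation of `ψ` on the grid `P × Q`. -/
def stepError (ψ : ℝ → ℝ → F) : ℝ → ℝ → F := fun u v => step2 P Q ψ u v - ψ u v

lemma step2_eq (ψ : ℝ → ℝ → F) (hu : u ∈ Ico 0 T) (hv : v ∈ Ico 0 T) :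
    step2 P Q ψ u v = ψ (P.pts (P.index u)) (Q.pts (Q.index v)) := by
  calc step2 P Q ψ u v
      = ∑ i ∈ Finset.range P.n, ∑ j ∈ Finset.range Q.n,
          if P.index u = i then if Q.index v = j then ψ (P.pts i) (Q.pts j) else 0 else 0 := by
        refine Finset.sum_congr rfl fun i hi => Finset.sum_congr rfl fun j hj => ?_
        simp only [indicator_apply, mem_prod, P.mem_Ico_pts_iff (Finset.mem_range.mp hi) hu,
          Q.mem_Ico_pts_iff (Finset.mem_range.mp hj) hv, ite_and]
    _ = ψ (P.pts (P.index u)) (Q.pts (Q.index v)) := by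
        simp [P.index_lt hu, Q.index_lt hv]

lemma step2_flip (ψ : ℝ → ℝ → F) (u v : ℝ) : step2 Q P (flip ψ) v u = step2 P Q ψ u v := by
  unfold step2
  rw [Finset.sum_comm]
  simp only [indicator, mem_prod, and_comm, flip]

lemma stepError_flip (ψ : ℝ → ℝ → F) (u v : ℝ) :
    stepError Q P (flip ψ) v u = stepError P Q ψ u v :=
  congrArg (· - ψ u v) (step2_flip P Q ψ u v)

lemma IsHolderBiWith.nonneg (hT : 0 < T) (hψ : IsHolderBiWith T lam c ψ) : 0 ≤ c := by
  have h := (norm_nonneg _).trans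
    (hψ.1 0 (left_mem_Icc.mpr hT.le) T (right_mem_Icc.mpr hT.le) 0 (left_mem_Icc.mpr hT.le))
  rw [sub_zero, abs_of_pos hT] at h
  exact nonneg_of_mul_nonneg_left h (Real.rpow_pos_of_pos hT lam)

lemma IsHolderBiWith.flip (hψ : IsHolderBiWith T lam c ψ) : IsHolderBiWith T lam c (flip ψ) :=
  ⟨fun u₁ hu₁ u₂ hu₂ v hv => hψ.2 v hv u₁ hu₁ u₂ hu₂,
    fun u hu v₁ hv₁ v₂ hv₂ => hψ.1 v₁ hv₁ v₂ hv₂ u hu⟩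

lemma norm_stepError_le (hlam : 0 ≤ lam) (hψ : IsHolderBiWith T lam c ψ) (hP : P.mesh ≤ m)
    (hQ : Q.mesh ≤ m) (hu : u ∈ Ico 0 T) (hv : v ∈ Ico 0 T) :
    ‖stepError P Q ψ u v‖ ≤ 2 * c * m ^ lam := by
  have hc : 0 ≤ c := hψ.nonneg (hu.1.trans_lt hu.2)
  have hp := P.pts_mem_Icc (P.index_lt hu).le
  have hq := Q.pts_mem_Icc (Q.index_lt hv).le
  rw [stepError, step2_eq P Q ψ hu hv]
  calc ‖ψ (P.pts (P.index u)) (Q.pts (Q.index v)) - ψ u v‖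
      ≤ ‖ψ (P.pts (P.index u)) (Q.pts (Q.index v)) - ψ u (Q.pts (Q.index v))‖ +
          ‖ψ u (Q.pts (Q.index v)) - ψ u v‖ := norm_sub_le_norm_sub_add_norm_sub _ _ _
    _ ≤ c * |P.pts (P.index u) - u| ^ lam + c * |Q.pts (Q.index v) - v| ^ lam :=
        add_le_add (hψ.1 u (Ico_subset_Icc_self hu) _ hp _ hq)
          (hψ.2 u (Ico_subset_Icc_self hu) v (Ico_subset_Icc_self hv) _ hq)
    _ ≤ c * m ^ lam + c * m ^ lam := by
        gcongr
        · exact (P.abs_pts_index_sub_le_mesh hu).trans hP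
        · exact (Q.abs_pts_index_sub_le_mesh hv).trans hQ
    _ = 2 * c * m ^ lam := by ring

lemma norm_stepError_sub_le_of_sub_le (hlam : 0 < lam) (hlam' : lam ≤ 1) (hγ : 0 ≤ γ)
    (hγlam : γ ≤ lam) (hψ : IsHolderBiWith T lam c ψ) (hu : u ∈ Ico 0 T)
    (hv : v ∈ Ico 0 T) (hr : r ∈ Ioo u T) (hrm : r - u ≤ m) :
    ‖stepError P Q ψ r v - stepError P Q ψ u v‖ ≤
      2 * c * ((r - u) ^ γ * P.incrWeight lam γ m u) := by
  have hc : 0 ≤ c := hψ.nonneg (hu.1.trans_lt hu.2)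
  have hd : 0 < r - u := sub_pos.mpr hr.1
  have hrT : r ∈ Ico 0 T := ⟨hu.1.trans hr.1.le, hr.2⟩
  have hstep : ‖step2 P Q ψ r v - step2 P Q ψ u v‖ ≤
      c * ((r - u) ^ γ * P.incrWeight lam γ m u) := by
    have hpts : P.pts (P.index u) ≤ P.pts (P.index r) :=
      P.monotoneOn_pts (P.index_lt hu).le (P.index_lt hrT).le (P.monotone_index hr.1.le)
    have h := hψ.1 _ (P.pts_mem_Icc (P.index_lt hu).le) _ (P.pts_mem_Icc (P.index_lt hrT).le) _
      (Q.pts_mem_Icc (Q.index_lt hv).le)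
    rw [abs_of_nonneg (sub_nonneg.mpr hpts)] at h
    rw [step2_eq P Q ψ hu hv, step2_eq P Q ψ hrT hv]
    exact h.trans (mul_le_mul_of_nonneg_left
      (P.pts_index_sub_rpow_le hlam hlam' hγ hγlam hu hr hrm) hc)
  have hψr : ‖ψ r v - ψ u v‖ ≤ c * ((r - u) ^ γ * P.incrWeight lam γ m u) := by
    have h := hψ.1 u (Ico_subset_Icc_self hu) r (Ico_subset_Icc_self hrT) v
      (Ico_subset_Icc_self hv)
    rw [abs_of_pos hd] at h
    refine h.trans (mul_le_mul_of_nonneg_left ?_ hc)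
    exact (rpow_le_rpow_mul_rpow_sub hd hrm hγlam).trans
      (mul_le_mul_of_nonneg_left (P.rpow_le_incrWeight hu) (by positivity))
  calc ‖stepError P Q ψ r v - stepError P Q ψ u v‖
      = ‖(step2 P Q ψ r v - step2 P Q ψ u v) - (ψ r v - ψ u v)‖ := by
        rw [stepError, stepError, sub_sub_sub_comm]
    _ ≤ _ := norm_sub_le _ _
    _ ≤ 2 * c * ((r - u) ^ γ * P.incrWeight lam γ m u) := by linarith

lemma norm_stepError_sub_left_le (hlam : 0 < lam) (hlam' : lam ≤ 1) (hγ : 0 ≤ γ)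
    (hγlam : γ ≤ lam) (hψ : IsHolderBiWith T lam c ψ) (hP : P.mesh ≤ m)
    (hQ : Q.mesh ≤ m) (hu : u ∈ Ico 0 T) (hv : v ∈ Ico 0 T) (hr : r ∈ Ioo u T) :
    ‖stepError P Q ψ r v - stepError P Q ψ u v‖ ≤
      (r - u) ^ γ * (4 * c * P.incrWeight lam γ m u) := by
  have hc : 0 ≤ c := hψ.nonneg (hu.1.trans_lt hu.2)
  have hm : 0 < m := P.mesh_pos.trans_le hP
  have hd : 0 < r - u := sub_pos.mpr hr.1
  have hw := P.incrWeight_nonneg (lam := lam) (γ := γ) hm.le hu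
  rcases le_total (r - u) m with hrm | hmr
  · calc _ ≤ 2 * c * ((r - u) ^ γ * P.incrWeight lam γ m u) :=
          norm_stepError_sub_le_of_sub_le P Q hlam hlam' hγ hγlam hψ hu hv hr hrm
      _ ≤ 4 * c * ((r - u) ^ γ * P.incrWeight lam γ m u) := by gcongr; norm_num
      _ = _ := by ring
  · have hrT : r ∈ Ico 0 T := ⟨hu.1.trans hr.1.le, hr.2⟩
    calc ‖stepError P Q ψ r v - stepError P Q ψ u v‖
        ≤ ‖stepError P Q ψ r v‖ + ‖stepError P Q ψ u v‖ := norm_sub_le _ _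
      _ ≤ 2 * c * m ^ lam + 2 * c * m ^ lam :=
          add_le_add (norm_stepError_le P Q hlam.le hψ hP hQ hrT hv)
            (norm_stepError_le P Q hlam.le hψ hP hQ hu hv)
      _ = 4 * c * m ^ lam := by ring
      _ ≤ 4 * c * (m ^ γ * m ^ (lam - γ)) := by
          gcongr
          exact rpow_le_rpow_mul_rpow_sub hm le_rfl hγlam
      _ ≤ 4 * c * ((r - u) ^ γ * P.incrWeight lam γ m u) := by
          gcongr
          exact P.rpow_le_incrWeight hu
      _ = _ := by ring

lemma norm_stepError_sub_right_le (hlam : 0 < lam) (hlam' : lam ≤ 1) (hγ : 0 ≤ γ)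
    (hγlam : γ ≤ lam) (hψ : IsHolderBiWith T lam c ψ) (hP : P.mesh ≤ m)
    (hQ : Q.mesh ≤ m) (hu : u ∈ Ico 0 T) (hv : v ∈ Ico 0 T) (hr : r ∈ Ioo v T) :
    ‖stepError P Q ψ u r - stepError P Q ψ u v‖ ≤
      (r - v) ^ γ * (4 * c * Q.incrWeight lam γ m v) := by
  simpa only [stepError_flip] using
    norm_stepError_sub_left_le Q P hlam hlam' hγ hγlam hψ.flip hQ hP hv hu hr

end StepError

section KernelBounds

variable {T α A : ℝ} {K K' : ℝ → ℝ → ℝ}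

lemma CondA.nonneg (hT : 0 < T) (hA : CondA T α A K K') : 0 ≤ A := by
  have h := (abs_nonneg _).trans (hA.2 (T / 2) T (by linarith) (by linarith) le_rfl).2
  exact nonneg_of_mul_nonneg_left h (Real.rpow_pos_of_pos (by linarith) _)

lemma rpow_mul_sub_rpow_le_of_nonpos {p u : ℝ} (hp : p ≤ 0) (hu : u ∈ Ioo 0 T) :
    u ^ p * (T - u) ^ p ≤ (T / 2) ^ p * (u ^ p + (T - u) ^ p) := by
  have hu₀ : 0 < u := hu.1
  have hu_T : 0 < T - u := sub_pos.mpr hu.2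
  have hT : 0 < T / 2 := by linarith
  rcases le_total u (T / 2) with h | h
  · have hle : (T - u) ^ p ≤ (T / 2) ^ p := Real.rpow_le_rpow_of_nonpos hT (by linarith) hp
    calc u ^ p * (T - u) ^ p ≤ u ^ p * (T / 2) ^ p := by gcongr
      _ ≤ u ^ p * (T / 2) ^ p + (T / 2) ^ p * (T - u) ^ p :=
          le_add_of_nonneg_right (by positivity)
      _ = _ := by ring
  · have hle : u ^ p ≤ (T / 2) ^ p := Real.rpow_le_rpow_of_nonpos hT h hp
    calc u ^ p * (T - u) ^ p ≤ (T / 2) ^ p * (T - u) ^ p := by gcongr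
      _ ≤ (T / 2) ^ p * u ^ p + (T / 2) ^ p * (T - u) ^ p :=
          le_add_of_nonneg_left (by positivity)
      _ = _ := by ring

lemma CondA.sq_le (hα : 0 ≤ α) (hA : CondA T α A K K') {u : ℝ} (hu : u ∈ Ioo 0 T) :
    K T u ^ 2 ≤
      A ^ 2 * ((T / 2) ^ (-(2 * α)) * (u ^ (-(2 * α)) + (T - u) ^ (-(2 * α)))) := by
  have hsq {x : ℝ} (hx : 0 ≤ x) : (x ^ (-α)) ^ 2 = x ^ (-(2 * α)) := by
    rw [← Real.rpow_mul_natCast hx]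
    congr 1
    push_cast
    ring
  calc K T u ^ 2 = |K T u| ^ 2 := (sq_abs _).symm
    _ ≤ (A * u ^ (-α) * (T - u) ^ (-α)) ^ 2 :=
        pow_le_pow_left₀ (abs_nonneg _) (hA.1 u T hu.1 hu.2 le_rfl) 2
    _ = A ^ 2 * (u ^ (-(2 * α)) * (T - u) ^ (-(2 * α))) := by
        rw [mul_pow, mul_pow, hsq hu.1.le, hsq (sub_nonneg.mpr hu.2.le), mul_assoc]
    _ ≤ _ := mul_le_mul_of_nonneg_left
        (rpow_mul_sub_rpow_le_of_nonpos (p := -(2 * α)) (by linarith) hu) (sq_nonneg A)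

lemma CondA.intervalIntegrable_sq (hK : Measurable (Function.uncurry K)) (hT : 0 ≤ T)
    (hα : 0 ≤ α) (hα' : 2 * α < 1) (hA : CondA T α A K K') :
    IntervalIntegrable (fun u => K T u ^ 2) volume 0 T := by
  have hbound : IntervalIntegrable (fun u => A ^ 2 *
      ((T / 2) ^ (-(2 * α)) * (u ^ (-(2 * α)) + (T - u) ^ (-(2 * α))))) volume 0 T :=
    (((intervalIntegral.intervalIntegrable_rpow' (by linarith)).add
      (intervalIntegrable_const_sub_rpow (by linarith) T)).const_mul _).const_mul _
  refine hbound.mono_fun' ((hK.comp measurable_prodMk_left).pow_const 2).aestronglyMeasurable ?_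
  rw [uIoc_of_le hT, ← restrict_Ioo_eq_restrict_Ioc]
  filter_upwards [ae_restrict_mem measurableSet_Ioo] with u hu
  rw [Real.norm_of_nonneg (sq_nonneg _)]
  exact hA.sq_le hα hu

/-- A bound for `∫ r in s..T, |K' r s| * (r - s) ^ β`, uniform in `s ∈ (0, T)`, for a kernel
satisfying Condition (A) with exponent `α < β` and constant `A`. -/
def kernelMoment (T α A β : ℝ) : ℝ := A * (T ^ (β - α) / (β - α))

lemma kernelMoment_nonneg {β : ℝ} (hT : 0 ≤ T) (hA : 0 ≤ A) (hαβ : α ≤ β) :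
    0 ≤ kernelMoment T α A β := by
  have : 0 ≤ β - α := sub_nonneg.mpr hαβ
  unfold kernelMoment
  positivity

lemma CondA.norm_integral_smul_le (hA : CondA T α A K K') {β M s : ℝ} (hαβ : α < β)
    (hM : 0 ≤ M) (hs : s ∈ Ioo 0 T) {f : ℝ → E}
    (hf : ∀ r ∈ Ioo s T, ‖f r‖ ≤ M * (r - s) ^ β) :
    ‖∫ r in s..T, K' r s • f r‖ ≤ M * kernelMoment T α A β := by
  have hA₀ : 0 ≤ A := hA.nonneg (hs.1.trans hs.2)
  have : 0 < β - α := sub_pos.mpr hαβ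
  have hbound : ∀ r ∈ Ioo s T, ‖K' r s • f r‖ ≤ M * A * (r - s) ^ (β - α - 1) := by
    intro r hr
    have hd : 0 < r - s := sub_pos.mpr hr.1
    rw [norm_smul, Real.norm_eq_abs]
    calc |K' r s| * ‖f r‖ ≤ (A * (r - s) ^ (-(α + 1))) * (M * (r - s) ^ β) := by
          gcongr
          · exact (hA.2 s r hs.1 hr.1 hr.2.le).2
          · exact hf r hr
      _ = M * A * ((r - s) ^ (-(α + 1)) * (r - s) ^ β) := by ring
      _ = M * A * (r - s) ^ (β - α - 1) := by
          rw [← Real.rpow_add hd]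
          congr 2
          ring
  calc ‖∫ r in s..T, K' r s • f r‖ ≤ ∫ r in s..T, M * A * (r - s) ^ (β - α - 1) :=
        norm_intervalIntegral_le_of_norm_le_Ioo hs.2.le
          ((intervalIntegrable_sub_const_rpow (by linarith) s).const_mul _) hbound
    _ = M * (A * ((T - s) ^ (β - α) / (β - α))) := by
        rw [intervalIntegral.integral_const_mul, integral_sub_left_endpoint_rpow (by linarith),
          sub_add_cancel, mul_assoc]
    _ ≤ M * kernelMoment T α A β := by
        unfold kernelMoment
        gcongr
        · exact sub_nonneg.mpr hs.2.le
        · exact sub_le_self _ hs.1.le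

lemma CondA.norm_BK_le (hA : CondA T α A K K') {β M u v : ℝ} (hαβ : α < β) (hM : 0 ≤ M)
    (hu : u ∈ Ioo 0 T) (hv : v ∈ Ioo 0 T) {φ : ℝ → ℝ → E}
    (hφ : ∀ r₁ ∈ Ioo u T, ∀ r₂ ∈ Ioo v T,
      ‖rectInc φ u r₁ v r₂‖ ≤ M * ((r₁ - u) ^ β * (r₂ - v) ^ β)) :
    ‖BK T K' φ u v‖ ≤ M * kernelMoment T α A β ^ 2 := by
  have hmoment : 0 ≤ kernelMoment T α A β :=
    kernelMoment_nonneg (hu.1.trans hu.2).le (hA.nonneg (hu.1.trans hu.2)) hαβ.le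
  have hBK : BK T K' φ u v =
      ∫ r₂ in v..T, K' r₂ v • ∫ r₁ in u..T, K' r₁ u • rectInc φ u r₁ v r₂ := by
    simp only [BK, ← intervalIntegral.integral_smul, smul_smul, mul_comm]
  have hinner : ∀ r₂ ∈ Ioo v T, ‖∫ r₁ in u..T, K' r₁ u • rectInc φ u r₁ v r₂‖ ≤
      M * kernelMoment T α A β * (r₂ - v) ^ β := by
    intro r₂ hr₂
    have hd : 0 < r₂ - v := sub_pos.mpr hr₂.1
    calc _ ≤ M * (r₂ - v) ^ β * kernelMoment T α A β :=
          hA.norm_integral_smul_le hαβ (by positivity) hu fun r₁ hr₁ =>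
            (hφ r₁ hr₁ r₂ hr₂).trans_eq (by ring)
      _ = _ := by ring
  rw [hBK, pow_two, ← mul_assoc]
  exact hA.norm_integral_smul_le hαβ (by positivity) hv hinner

lemma le_sqrt_mul_sqrt {x y z : ℝ} (hx : 0 ≤ x) (hy : x ≤ y) (hz : x ≤ z) : x ≤ √y * √z := by
  rw [← Real.sqrt_mul (hx.trans hy)]
  exact Real.le_sqrt_of_sq_le ((pow_two x).trans_le (mul_le_mul hy hz hx (hx.trans hy)))

lemma sqrt_rpow_mul {x p : ℝ} (hx : 0 ≤ x) (γ : ℝ) : √(x ^ γ * p) = x ^ (γ / 2) * √p := by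
  rw [Real.sqrt_mul (by positivity), Real.sqrt_eq_rpow, ← Real.rpow_mul hx, mul_one_div]

lemma norm_rectInc_le {F : Type*} [NormedAddCommGroup F] {φ : ℝ → ℝ → F}
    {γ p q u r₁ v r₂ : ℝ} (hr₁ : u ≤ r₁) (hr₂ : v ≤ r₂)
    (hu₁ : ‖φ r₁ r₂ - φ u r₂‖ ≤ (r₁ - u) ^ γ * p) (hu₂ : ‖φ r₁ v - φ u v‖ ≤ (r₁ - u) ^ γ * p)
    (hv₁ : ‖φ r₁ r₂ - φ r₁ v‖ ≤ (r₂ - v) ^ γ * q) (hv₂ : ‖φ u r₂ - φ u v‖ ≤ (r₂ - v) ^ γ * q) :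
    ‖rectInc φ u r₁ v r₂‖ ≤
      √(2 * p) * √(2 * q) * ((r₁ - u) ^ (γ / 2) * (r₂ - v) ^ (γ / 2)) := by
  have hu : rectInc φ u r₁ v r₂ = (φ r₁ r₂ - φ u r₂) - (φ r₁ v - φ u v) := by
    rw [rectInc]
    abel
  have hv : rectInc φ u r₁ v r₂ = (φ r₁ r₂ - φ r₁ v) - (φ u r₂ - φ u v) := by
    rw [rectInc]
    abel
  have hp : ‖rectInc φ u r₁ v r₂‖ ≤ (r₁ - u) ^ γ * (2 * p) :=
    hu ▸ (norm_sub_le _ _).trans (by linarith)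
  have hq : ‖rectInc φ u r₁ v r₂‖ ≤ (r₂ - v) ^ γ * (2 * q) :=
    hv ▸ (norm_sub_le _ _).trans (by linarith)
  calc _ ≤ √((r₁ - u) ^ γ * (2 * p)) * √((r₂ - v) ^ γ * (2 * q)) :=
        le_sqrt_mul_sqrt (norm_nonneg _) hp hq
    _ = _ := by
        rw [sqrt_rpow_mul (sub_nonneg.mpr hr₁), sqrt_rpow_mul (sub_nonneg.mpr hr₂)]
        ring

lemma CondA.norm_AK_le (hA : CondA T α A K K') {γ S p u : ℝ} (hγ : 2 * α < γ)
    (hu : u ∈ Ioo 0 T) {f : ℝ → E} (hS : ∀ r ∈ Ico 0 T, ‖f r‖ ≤ S)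
    (hp : ∀ r ∈ Ioo u T, ‖f r - f u‖ ≤ (r - u) ^ γ * p) :
    ‖AK T K' f u‖ ≤ √S * (kernelMoment T α A (γ / 2) * √(2 * p)) := by
  calc ‖AK T K' f u‖ ≤ √S * √(2 * p) * kernelMoment T α A (γ / 2) := by
        refine hA.norm_integral_smul_le (by linarith) (by positivity) hu fun r hr => ?_
        have hd : 0 ≤ r - u := sub_nonneg.mpr hr.1.le
        have hS' : ‖f r - f u‖ ≤ 2 * S := by
          linarith [norm_sub_le (f r) (f u), hS r ⟨(hu.1.trans hr.1).le, hr.2⟩,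
            hS u ⟨hu.1.le, hu.2⟩]
        calc ‖f r - f u‖ ≤ √(2 * S) * √((r - u) ^ γ * p) :=
              le_sqrt_mul_sqrt (norm_nonneg _) hS' (hp r hr)
          _ = √S * √(2 * p) * (r - u) ^ (γ / 2) := by
              rw [sqrt_rpow_mul hd, Real.sqrt_mul zero_le_two, Real.sqrt_mul zero_le_two]
              ring
    _ = _ := by ring

lemma CondA.norm_KstarT_le (hA : CondA T α A K K') {γ S p q u v : ℝ} (hγ : 2 * α < γ)
    (hu : u ∈ Ioo 0 T) (hv : v ∈ Ioo 0 T) {φ : ℝ → ℝ → E}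
    (hφ : ∀ x ∈ Ico 0 T, ∀ y ∈ Ico 0 T, ‖φ x y‖ ≤ S)
    (hφu : ∀ y ∈ Ico 0 T, ∀ r ∈ Ioo u T, ‖φ r y - φ u y‖ ≤ (r - u) ^ γ * p)
    (hφv : ∀ x ∈ Ico 0 T, ∀ r ∈ Ioo v T, ‖φ x r - φ x v‖ ≤ (r - v) ^ γ * q) :
    ‖KstarT T K K' φ u v‖ ≤
      (|K T u| * √S + kernelMoment T α A (γ / 2) * √(2 * p)) *
        (|K T v| * √S + kernelMoment T α A (γ / 2) * √(2 * q)) := by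
  set a := kernelMoment T α A (γ / 2)
  have hu' : u ∈ Ico 0 T := Ioo_subset_Ico_self hu
  have hv' : v ∈ Ico 0 T := Ioo_subset_Ico_self hv
  have hS : 0 ≤ S := (norm_nonneg _).trans (hφ u hu' v hv')
  have hvalue : ‖(K T u * K T v) • φ u v‖ ≤ |K T u| * √S * (|K T v| * √S) := by
    rw [norm_smul, Real.norm_eq_abs, abs_mul, mul_mul_mul_comm, Real.mul_self_sqrt hS]
    gcongr
    exact hφ u hu' v hv'
  have hAKu : ‖K T v • AK T K' (fun x => φ x v) u‖ ≤ |K T v| * (√S * (a * √(2 * p))) := by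
    rw [norm_smul, Real.norm_eq_abs]
    gcongr
    exact hA.norm_AK_le hγ hu (fun r hr => hφ r hr v hv') (hφu v hv')
  have hAKv : ‖K T u • AK T K' (fun y => φ u y) v‖ ≤ |K T u| * (√S * (a * √(2 * q))) := by
    rw [norm_smul, Real.norm_eq_abs]
    gcongr
    exact hA.norm_AK_le hγ hv (hφ u hu') (hφv u hu')
  have hBK : ‖BK T K' φ u v‖ ≤ √(2 * p) * √(2 * q) * a ^ 2 := by
    refine hA.norm_BK_le (by linarith) (by positivity) hu hv fun r₁ hr₁ r₂ hr₂ => ?_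
    exact (norm_rectInc_le hr₁.1.le hr₂.1.le
      (hφu r₂ ⟨(hv.1.trans hr₂.1).le, hr₂.2⟩ r₁ hr₁) (hφu v hv' r₁ hr₁)
      (hφv r₁ ⟨(hu.1.trans hr₁.1).le, hr₁.2⟩ r₂ hr₂) (hφv u hu' r₂ hr₂))
  -- The four bounds are the terms of an expanded product of a factor in `u` and one in `v`.
  calc ‖KstarT T K K' φ u v‖
      ≤ |K T u| * √S * (|K T v| * √S) + |K T v| * (√S * (a * √(2 * p))) +
          |K T u| * (√S * (a * √(2 * q))) + √(2 * p) * √(2 * q) * a ^ 2 :=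
        norm_add₄_le.trans (by gcongr)
    _ = _ := by ring

end KernelBounds

section ProductWeights

variable {F : Type*} [NormedAddCommGroup F] {a b : ℝ} {f : ℝ → ℝ → F} {G H : ℝ → ℝ}

lemma integral_integral_norm_sq_le_of_le_sqrt_mul_sqrt (hab : a ≤ b)
    (hG : IntervalIntegrable G volume a b) (hH : IntervalIntegrable H volume a b)
    (hG₀ : ∀ u ∈ Ioo a b, 0 ≤ G u) (hH₀ : ∀ v ∈ Ioo a b, 0 ≤ H v)
    (hf : ∀ u ∈ Ioo a b, ∀ v ∈ Ioo a b, ‖f u v‖ ≤ √(G u) * √(H v)) :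
    ∫ u in a..b, ∫ v in a..b, ‖f u v‖ ^ 2 ≤ (∫ u in a..b, G u) * ∫ v in a..b, H v := by
  have hsq : ∀ u ∈ Ioo a b, ∀ v ∈ Ioo a b, ‖‖f u v‖ ^ 2‖ ≤ G u * H v := by
    intro u hu v hv
    rw [norm_pow, norm_norm, ← Real.sq_sqrt (hG₀ u hu), ← Real.sq_sqrt (hH₀ v hv), ← mul_pow]
    exact pow_le_pow_left₀ (norm_nonneg _) (hf u hu v hv) 2
  have hinner : ∀ u ∈ Ioo a b, ‖∫ v in a..b, ‖f u v‖ ^ 2‖ ≤ G u * ∫ v in a..b, H v := by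
    intro u hu
    rw [← intervalIntegral.integral_const_mul]
    exact norm_intervalIntegral_le_of_norm_le_Ioo hab (hH.const_mul _) (hsq u hu)
  rw [← intervalIntegral.integral_mul_const]
  exact (le_abs_self _).trans
    (norm_intervalIntegral_le_of_norm_le_Ioo hab (hG.mul_const _) hinner)

lemma integral_norm_diag_le_of_le_sqrt_mul_sqrt (hab : a ≤ b)
    (hG : IntervalIntegrable G volume a b) (hH : IntervalIntegrable H volume a b)
    (hG₀ : ∀ u ∈ Ioo a b, 0 ≤ G u) (hH₀ : ∀ v ∈ Ioo a b, 0 ≤ H v)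
    (hf : ∀ u ∈ Ioo a b, ∀ v ∈ Ioo a b, ‖f u v‖ ≤ √(G u) * √(H v)) :
    ∫ r in a..b, ‖f r r‖ ≤ ((∫ u in a..b, G u) + ∫ v in a..b, H v) / 2 := by
  have hdiag : ∀ r ∈ Ioo a b, ‖‖f r r‖‖ ≤ (G r + H r) / 2 := by
    intro r hr
    rw [norm_norm]
    linarith [hf r hr r hr, two_mul_le_add_sq √(G r) √(H r), Real.sq_sqrt (hG₀ r hr),
      Real.sq_sqrt (hH₀ r hr)]
  rw [← intervalIntegral.integral_add hG hH, ← intervalIntegral.integral_div]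
  exact (le_abs_self _).trans
    (norm_intervalIntegral_le_of_norm_le_Ioo hab ((hG.add hH).div_const 2) hdiag)

end ProductWeights

section ErrorBounds

variable {T α A lam γ c a m : ℝ} {K K' : ℝ → ℝ → ℝ} (P Q : Partition T)

lemma mul_sqrt_add_mul_sqrt_le {s t : ℝ} (hs : 0 ≤ s) (ht : 0 ≤ t) (x y : ℝ) :
    x * √s + y * √t ≤ √(2 * (x ^ 2 * s + y ^ 2 * t)) := by
  refine Real.le_sqrt_of_sq_le (add_sq_le.trans_eq ?_)
  rw [mul_pow, mul_pow, Real.sq_sqrt hs, Real.sq_sqrt ht]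

/-- A weight whose products `G_P(u) * G_Q(v)` dominate `‖(K* ⊗ K*)(ψ^π - ψ)(u, v)‖ ^ 2` on the grid
`P × Q`, where `c` is the Hölder constant of `ψ`, `a` a moment of `∂K/∂t`, and `m` an upper bound
for the mesh. -/
def errorWeight (K : ℝ → ℝ → ℝ) (lam γ c a m u : ℝ) : ℝ :=
  4 * c * (m ^ lam * K T u ^ 2 + 4 * a ^ 2 * P.incrWeight lam γ m u)

lemma errorWeight_nonneg (hc : 0 ≤ c) (hm : 0 ≤ m) {u : ℝ} (hu : u ∈ Ico 0 T) :
    0 ≤ errorWeight P K lam γ c a m u := by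
  have := P.incrWeight_nonneg (lam := lam) (γ := γ) hm hu
  unfold errorWeight
  positivity

lemma intervalIntegrable_errorWeight (hγ : γ < 1)
    (hK : IntervalIntegrable (fun u => K T u ^ 2) volume 0 T) :
    IntervalIntegrable (errorWeight P K lam γ c a m) volume 0 T :=
  ((hK.const_mul _).add ((P.intervalIntegrable_incrWeight hγ).const_mul _)).const_mul _

/-- A bound for `∫ u in 0..T, errorWeight P K lam γ c a m u` which depends on the partition `P`
only through the bound `m` for its mesh. -/
def errorModulus (T : ℝ) (K : ℝ → ℝ → ℝ) (lam γ c a m : ℝ) : ℝ :=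
  4 * c * (m ^ lam * (∫ u in 0..T, K T u ^ 2) +
    4 * a ^ 2 * (m ^ (lam - γ) * (1 + 1 / (1 - γ)) * T))

lemma integral_errorWeight_le (hc : 0 ≤ c) (hγ : γ < 1) (hγlam : γ ≤ lam) (hm : P.mesh ≤ m)
    (hK : IntervalIntegrable (fun u => K T u ^ 2) volume 0 T) :
    ∫ u in 0..T, errorWeight P K lam γ c a m u ≤ errorModulus T K lam γ c a m := by
  simp only [errorWeight, errorModulus]
  rw [intervalIntegral.integral_const_mul, intervalIntegral.integral_add (hK.const_mul _)
    ((P.intervalIntegrable_incrWeight hγ).const_mul _), intervalIntegral.integral_const_mul,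
    intervalIntegral.integral_const_mul]
  gcongr
  exact P.integral_incrWeight_le hγ hγlam hm

lemma tendsto_errorModulus (hlam : 0 < lam) (hγlam : γ < lam) :
    Tendsto (errorModulus T K lam γ c a) (𝓝 0) (𝓝 0) := by
  have hrpow {p : ℝ} (hp : 0 < p) : Tendsto (fun m : ℝ => m ^ p) (𝓝 0) (𝓝 0) := by
    simpa only [Real.zero_rpow hp.ne'] using
      (Real.continuousAt_rpow_const 0 p (.inr hp.le)).tendsto
  unfold errorModulus
  simpa only [zero_mul, mul_zero, add_zero] using
    (((hrpow hlam).mul_const (∫ u in 0..T, K T u ^ 2)).add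
      ((((hrpow (sub_pos.mpr hγlam)).mul_const (1 + 1 / (1 - γ))).mul_const T).const_mul
        (4 * a ^ 2))).const_mul (4 * c)

lemma CondA.norm_KstarT_stepError_le {ψ : ℝ → ℝ → E} (hα : 0 ≤ α) (hA : CondA T α A K K')
    (hψ : IsHolderBiWith T lam c ψ) (hγ : 2 * α < γ) (hγlam : γ ≤ lam) (hlam : lam ≤ 1)
    (hP : P.mesh ≤ m) (hQ : Q.mesh ≤ m) {u v : ℝ} (hu : u ∈ Ioo 0 T) (hv : v ∈ Ioo 0 T) :
    ‖KstarT T K K' (stepError P Q ψ) u v‖ ≤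
      √(errorWeight P K lam γ c (kernelMoment T α A (γ / 2)) m u) *
        √(errorWeight Q K lam γ c (kernelMoment T α A (γ / 2)) m v) := by
  have hT : 0 < T := hu.1.trans hu.2
  have hm : 0 < m := P.mesh_pos.trans_le hP
  have hlam₀ : 0 < lam := by linarith
  have hγ₀ : 0 ≤ γ := by linarith
  have hc : 0 ≤ c := hψ.nonneg hT
  have hfactor (R : Partition T) {x : ℝ} (hx : x ∈ Ioo 0 T) :
      |K T x| * √(2 * c * m ^ lam) + kernelMoment T α A (γ / 2) *
        √(2 * (4 * c * R.incrWeight lam γ m x)) ≤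
      √(errorWeight R K lam γ c (kernelMoment T α A (γ / 2)) m x) := by
    have hw := R.incrWeight_nonneg (lam := lam) (γ := γ) hm.le (Ioo_subset_Ico_self hx)
    refine (mul_sqrt_add_mul_sqrt_le (by positivity) (by positivity) _ _).trans_eq ?_
    rw [errorWeight, sq_abs]
    congr 1
    ring
  have ha := kernelMoment_nonneg hT.le (hA.nonneg hT) (by linarith : α ≤ γ / 2)
  refine (hA.norm_KstarT_le hγ hu hv
    (fun x hx y hy => norm_stepError_le P Q hlam₀.le hψ hP hQ hx hy)
    (fun y hy r hr => norm_stepError_sub_left_le P Q hlam₀ hlam hγ₀ hγlam hψ hP hQ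
      (Ioo_subset_Ico_self hu) hy hr)
    (fun x hx r hr => norm_stepError_sub_right_le P Q hlam₀ hlam hγ₀ hγlam hψ hP hQ
      hx (Ioo_subset_Ico_self hv) hr)).trans ?_
  exact mul_le_mul (hfactor P hu) (hfactor Q hv) (by positivity) (Real.sqrt_nonneg _)

lemma CondA.integral_norm_KstarT_stepError_le {ψ : ℝ → ℝ → E} (hα : 0 ≤ α)
    (hA : CondA T α A K K') (hK : IntervalIntegrable (fun u => K T u ^ 2) volume 0 T)
    (hψ : IsHolderBiWith T lam c ψ) (hγ : 2 * α < γ) (hγlam : γ < lam) (hlam : lam ≤ 1)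
    (hT : 0 < T) (hP : P.mesh ≤ m) (hQ : Q.mesh ≤ m) :
    ∫ u in 0..T, ∫ v in 0..T, ‖KstarT T K K' (stepError P Q ψ) u v‖ ^ 2 ≤
        errorModulus T K lam γ c (kernelMoment T α A (γ / 2)) m ^ 2 ∧
      ∫ r in 0..T, ‖KstarT T K K' (stepError P Q ψ) r r‖ ≤
        errorModulus T K lam γ c (kernelMoment T α A (γ / 2)) m := by
  set a := kernelMoment T α A (γ / 2)
  have hc : 0 ≤ c := hψ.nonneg hT
  have hm : 0 ≤ m := P.mesh_pos.le.trans hP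
  have hγ₁ : γ < 1 := hγlam.trans_le hlam
  have hint (R : Partition T) : IntervalIntegrable (errorWeight R K lam γ c a m) volume 0 T :=
    intervalIntegrable_errorWeight R hγ₁ hK
  have hnonneg (R : Partition T) : ∀ u ∈ Ioo 0 T, 0 ≤ errorWeight R K lam γ c a m u :=
    fun u hu => errorWeight_nonneg R hc hm (Ioo_subset_Ico_self hu)
  have hintegral {R : Partition T} (hR : R.mesh ≤ m) :
      ∫ u in 0..T, errorWeight R K lam γ c a m u ≤ errorModulus T K lam γ c a m :=
    integral_errorWeight_le R hc hγ₁ hγlam.le hR hK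
  have hpointwise : ∀ u ∈ Ioo 0 T, ∀ v ∈ Ioo 0 T, ‖KstarT T K K' (stepError P Q ψ) u v‖ ≤
      √(errorWeight P K lam γ c a m u) * √(errorWeight Q K lam γ c a m v) := fun u hu v hv =>
    hA.norm_KstarT_stepError_le P Q hα hψ hγ hγlam.le hlam hP hQ hu hv
  have hintegral_nonneg (R : Partition T) : 0 ≤ ∫ u in 0..T, errorWeight R K lam γ c a m u :=
    (norm_nonneg _).trans (norm_intervalIntegral_le_of_norm_le_Ioo (f := fun _ => (0 : ℝ)) hT.le
      (hint R) fun u hu => norm_zero.trans_le (hnonneg R u hu))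
  constructor
  · calc _ ≤ (∫ u in 0..T, errorWeight P K lam γ c a m u) *
          ∫ v in 0..T, errorWeight Q K lam γ c a m v :=
          integral_integral_norm_sq_le_of_le_sqrt_mul_sqrt hT.le (hint P) (hint Q) (hnonneg P)
            (hnonneg Q) hpointwise
      _ ≤ errorModulus T K lam γ c a m ^ 2 := by
          rw [pow_two]
          exact mul_le_mul (hintegral hP) (hintegral hQ) (hintegral_nonneg Q)
            ((hintegral_nonneg P).trans (hintegral hP))
  · linarith [hintegral hP, hintegral hQ, integral_norm_diag_le_of_le_sqrt_mul_sqrt hT.le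
      (hint P) (hint Q) (hnonneg P) (hnonneg Q) hpointwise]

end ErrorBounds

lemma exists_mesh_lt_imp_lt_of_tendsto {T ε : ℝ} {I : Partition T → Partition T → ℝ}
    {η : ℝ → ℝ} (hη : Tendsto η (𝓝 0) (𝓝 0)) (hI : ∀ P Q, I P Q ≤ η (max P.mesh Q.mesh))
    (hε : 0 < ε) : ∃ δ > 0, ∀ P Q, max P.mesh Q.mesh < δ → I P Q < ε := by
  obtain ⟨δ, hδ, hη_lt⟩ := Metric.eventually_nhds_iff.mp (hη.eventually_lt_const hε)
  refine ⟨δ, hδ, fun P Q hPQ => (hI P Q).trans_lt (hη_lt ?_)⟩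
  rwa [Real.dist_0_eq_abs, abs_of_pos (lt_max_of_lt_left P.mesh_pos)]

theorem kstarT_step2_tendsto_of_holderBi_general {E : Type*} [NormedAddCommGroup E]
    [NormedSpace ℝ E] [CompleteSpace E] (T α lam : ℝ) (hT : 0 < T) (hα : 0 ≤ α)
    (K K' : ℝ → ℝ → ℝ) (hK : IsVolterraKernel K) (hA : ∃ C : ℝ, CondA T α C K K')
    (ψ : ℝ → ℝ → E) (hlam' : lam ≤ 1) (hψ : IsHolderBi T lam ψ) (hαlam : 2 * α < lam) :
    (∀ ε > 0, ∃ δ > 0, ∀ P Q : Partition T, max P.mesh Q.mesh < δ →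
      (∫ u in (0:ℝ)..T, ∫ v in (0:ℝ)..T,
          ‖KstarT T K K' (fun x y => step2 P Q ψ x y - ψ x y) u v‖ ^ 2) < ε) ∧
    (∀ ε > 0, ∃ δ > 0, ∀ P Q : Partition T, max P.mesh Q.mesh < δ →
      (∫ r in (0:ℝ)..T,
          ‖KstarT T K K' (fun x y => step2 P Q ψ x y - ψ x y) r r‖) < ε) := by
  obtain ⟨A, hA⟩ := hA
  obtain ⟨c, hψ⟩ := hψ
  obtain ⟨γ, hγ, hγlam⟩ := exists_between hαlam
  have hK_sq := hA.intervalIntegrable_sq hK.1 hT.le hα (by linarith)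
  let η : ℝ → ℝ := errorModulus T K lam γ c (kernelMoment T α A (γ / 2))
  have hη : Tendsto η (𝓝 0) (𝓝 0) := tendsto_errorModulus (by linarith) hγlam
  have hη_sq : Tendsto (fun m => η m ^ 2) (𝓝 0) (𝓝 0) := by
    simpa only [zero_pow two_ne_zero] using hη.pow 2
  have hle (P Q : Partition T) := hA.integral_norm_KstarT_stepError_le P Q hα hK_sq hψ hγ hγlam
    hlam' hT (le_max_left P.mesh Q.mesh) (le_max_right P.mesh Q.mesh)
  exact ⟨fun ε hε => exists_mesh_lt_imp_lt_of_tendsto hη_sq (fun P Q => (hle P Q).1) hε,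
    fun ε hε => exists_mesh_lt_imp_lt_of_tendsto hη (fun P Q => (hle P Q).2) hε⟩

/-- Corollary 4.2: for a `λ`-Hölder bi-continuous `ψ` with `λ > 2α`,
both the `L²([0,T]²)` and diagonal `L¹([0,T])` convergences hold as the mesh tends to `0`. -/
theorem kstarT_step2_tendsto_of_holderBi {E : Type*} [NormedAddCommGroup E] [NormedSpace ℝ E]
    [CompleteSpace E] (T α lam : ℝ) (hT : 0 < T) (hα : 0 ≤ α) (hα' : α < 1 / 4)
    (K K' : ℝ → ℝ → ℝ) (hK : IsVolterraKernel K) (hA : ∃ C : ℝ, CondA T α C K K')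
    (ψ : ℝ → ℝ → E) (hlam : 0 < lam) (hlam' : lam ≤ 1)
    (hψ : IsHolderBi T lam ψ) (hαlam : 2 * α < lam) :
    (∀ ε > 0, ∃ δ > 0, ∀ P Q : Partition T, max P.mesh Q.mesh < δ →
      (∫ u in (0:ℝ)..T, ∫ v in (0:ℝ)..T,
          ‖KstarT T K K' (fun x y => step2 P Q ψ x y - ψ x y) u v‖ ^ 2) < ε) ∧
    (∀ ε > 0, ∃ δ > 0, ∀ P Q : Partition T, max P.mesh Q.mesh < δ →
      (∫ r in (0:ℝ)..T,
          ‖KstarT T K K' (fun x y => step2 P Q ψ x y - ψ x y) r r‖) < ε) :=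
  kstarT_step2_tendsto_of_holderBi_general T α lam hT hα K K' hK hA ψ hlam' hψ hαlam

end YS
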